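/- Let r ≥ 1, let N ≥ 2r, and let M be a nondegenerate 2-dimensional linear subspace of the space of skew-symmetric (N+1)×(N+1) complex matrices such that every nonzero matrix in M has rank 2r. Set h = N+1−2r. Then there exist a partition r = r₁ + ⋯ + r_h with r₁ ≥ ⋯ ≥ r_h ≥ 1, an invertible complex (N+1)×(N+1) matrix S, and a basis (A, B) of M such that S A Sᵀ = F_λ(1,0) and S B Sᵀ = F_λ(0,1), where F_λ is the standard pencil associated to the partition. -/

import Mathlib

open Matrix

open scoped Classical in
/-- Partial sums of the partition: `partialSum rpart k = r₁ + ⋯ + r_k`. -/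
noncomputable def partialSum {h : ℕ} (rpart : Fin h → ℕ) (k : ℕ) : ℕ :=
  ∑ j ∈ Finset.range k, if hj : j < h then rpart ⟨j, hj⟩ else 0

open scoped Classical in
/-- The block-diagonal matrix `F̄(a,b)` with blocks `U_{r₁}(a,b), …, U_{r_h}(a,b)`,
where `U_{r_i}(a,b)` is the `r_i × (r_i+1)` matrix with `a` on the main diagonal and
`b` on the superdiagonal. -/
noncomputable def Fbar {h : ℕ} (rpart : Fin h → ℕ) (r m : ℕ) (a b : ℂ) :
    Matrix (Fin r) (Fin m) ℂ :=
  Matrix.of fun s t =>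
    if ∃ i : Fin h, partialSum rpart i ≤ s.val ∧ s.val < partialSum rpart (i.val + 1) ∧
        t.val = s.val + i.val then a
    else if ∃ i : Fin h, partialSum rpart i ≤ s.val ∧ s.val < partialSum rpart (i.val + 1) ∧
        t.val = s.val + i.val + 1 then b
    else 0

/-- The standard skew-symmetric pencil `F_λ(a,b)` of size `(2r+h)×(2r+h)` associated to a
partition `r = r₁ + ⋯ + r_h`, with block form `[[0, F̄(a,b)], [−F̄(a,b)ᵀ, 0]]`. -/
noncomputable def Fpencil {h : ℕ} (rpart : Fin h → ℕ) (r : ℕ) (a b : ℂ) :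
    Matrix (Fin (2*r + h)) (Fin (2*r + h)) ℂ :=
  Matrix.reindex (finSumFinEquiv.trans (finCongr (by omega)))
    (finSumFinEquiv.trans (finCongr (by omega)))
    (Matrix.fromBlocks 0 (Fbar rpart r (r + h) a b) (-(Fbar rpart r (r + h) a b)ᵀ) 0)

/-!
Let `A` and `B` be skew-symmetric forms spanning a pencil of constant corank `d`. Over an
algebraically closed field two bilinear forms always have a singular vector, one annihilated by some
member of the pencil they span; adjoining such vectors one by one gives a subspace `L` that is
isotropic for both forms and satisfies `2 dim L ≥ dim V + d`. Pairing `L` with a complement `Q`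
turns the pencil into a pencil of maps `L → Q*`, whose kernels lie in those of the forms. The
constant corank therefore forces all nonzero members to be surjective and `dim L = dim Q + d`.

A pencil all of whose nonzero members are surjective is a sum of blocks `U_ρ(a, b)`. This follows by
induction on the dimension of the target from the reflection functor of the Kronecker quiver, which
shortens each block by one and discards the blocks with `ρ = 0`.

In the resulting basis of `Q ⊕ L` the only blocks left to clear are the Gram matrices `G` and `H` of
the two forms on `Q`. A unipotent congruence changes them by `F Y - (F Y)ᵀ`, where `F` is the
Kronecker normal form, and equating both with `G` and `H` is a recursion solvable as soon as `2` is
invertible. Triviality of the common kernel excludes the blocks with `ρ = 0`.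
-/

section SingularVectors

variable {k U U' : Type*} [Field k] [IsAlgClosed k] [AddCommGroup U] [Module k U]
  [FiniteDimensional k U] [AddCommGroup U'] [Module k U'] [FiniteDimensional k U']

theorem exists_smul_add_smul_apply_eq_zero [Nontrivial U] (f g : U →ₗ[k] U')
    (hle : Module.finrank k U' ≤ Module.finrank k U) :
    ∃ a b : k, (a ≠ 0 ∨ b ≠ 0) ∧ ∃ x ≠ 0, (a • f + b • g) x = 0 := by
  by_cases hf : Function.Injective f
  · let F : U ≃ₗ[k] U' :=
      f.linearEquivOfInjective hf (hle.antisymm' (f.finrank_le_finrank_of_injective hf))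
    obtain ⟨μ, hμ⟩ := Module.End.exists_eigenvalue (F.symm.toLinearMap ∘ₗ g)
    obtain ⟨x, hx⟩ := hμ.exists_hasEigenvector
    have hg : g x = μ • f x := by
      have h := congrArg F hx.apply_eq_smul
      simpa [F] using h
    exact ⟨-μ, 1, Or.inr one_ne_zero, x, hx.2, by simp [hg]⟩
  · rw [← LinearMap.ker_eq_bot, Submodule.eq_bot_iff] at hf
    push Not at hf
    obtain ⟨x, hfx, hx⟩ := hf
    exact ⟨1, 0, Or.inl one_ne_zero, x, hx, by simpa using hfx⟩

end SingularVectors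

section Isotropic

variable {k V : Type*} [Field k] [AddCommGroup V] [Module k V] {A B : LinearMap.BilinForm k V}

lemma inf_ker_le_orthogonal_sup_span_singleton {C : LinearMap.BilinForm k V} {K H : Submodule k V}
    (hH : H ≤ C.orthogonal K) (x : V) :
    H ⊓ LinearMap.ker (C x) ≤ C.orthogonal (K ⊔ Submodule.span k {x}) := by
  intro y hy z hz
  obtain ⟨u, hu, v, hv, rfl⟩ := Submodule.mem_sup.mp hz
  obtain ⟨c, rfl⟩ := Submodule.mem_span_singleton.mp hv
  have hCu : C u y = 0 := hH hy.1 u hu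
  have hCx : C x y = 0 := hy.2
  simp [hCu, hCx]

lemma eventually_inf_ker_add_smul_eq {H : Submodule k V} {x : V} {a b : k} (hab : a ≠ 0 ∨ b ≠ 0)
    (hx : ∀ y ∈ H, a * A x y + b * B x y = 0) :
    ∀ᶠ t : k in Filter.cofinite,
      H ⊓ LinearMap.ker ((A + t • B) x) = H ⊓ LinearMap.ker (A x) ⊓ LinearMap.ker (B x) := by
  have hfin : {t : k | ¬ b - t * a ≠ 0}.Finite := by
    refine Set.Subsingleton.finite fun t ht s hs => ?_
    replace ht : b = t * a := by simpa [sub_eq_zero] using ht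
    replace hs : b = s * a := by simpa [sub_eq_zero] using hs
    refine mul_right_cancel₀ (b := a) (fun ha => ?_) (ht.symm.trans hs)
    simp [ha, ht] at hab
  filter_upwards [hfin] with t ht
  refine le_antisymm (fun y hy => ?_) fun y hy => ⟨hy.1.1, ?_⟩
  · have hC : A x y + t * B x y = 0 := hy.2
    have hBy : B x y = 0 := by
      refine (mul_eq_zero.mp ?_).resolve_left ht
      linear_combination hx y hy.1 - a * hC
    exact ⟨⟨hy.1, by simpa [hBy] using hC⟩, hBy⟩
  · have hAy : A x y = 0 := hy.1.2
    have hBy : B x y = 0 := hy.2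
    simp [hAy, hBy]

variable [FiniteDimensional k V]

lemma finrank_le_finrank_inf_ker_add_one (H : Submodule k V) (f : Module.Dual k V) :
    Module.finrank k H ≤ Module.finrank k ↥(H ⊓ LinearMap.ker f) + 1 := by
  have hrange : Module.finrank k (f.domRestrict H).range ≤ 1 :=
    (Submodule.finrank_le _).trans_eq (Module.finrank_self k)
  have hker : Module.finrank k (f.domRestrict H).ker =
      Module.finrank k ↥(H ⊓ LinearMap.ker f) := by
    rw [LinearMap.ker_domRestrict, ← Submodule.finrank_map_subtype_eq, Submodule.map_comap_subtype]
  have := (f.domRestrict H).finrank_range_add_finrank_ker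
  omega

lemma finrank_add_finrank_inf_orthogonal_le {C : LinearMap.BilinForm k V} (hC : C.IsAlt)
    {H : Submodule k V} {x : V} (hx : x ∈ H) :
    Module.finrank k H + Module.finrank k ↥(H ⊓ C.orthogonal H) ≤
      Module.finrank k ↥(H ⊓ LinearMap.ker (C x)) +
        Module.finrank k ↥(H ⊓ LinearMap.ker (C x) ⊓ C.orthogonal (H ⊓ LinearMap.ker (C x))) := by
  by_cases hH : H ≤ LinearMap.ker (C x)
  · rw [inf_eq_left.mpr hH]
  have hle : H ⊓ C.orthogonal H ≤
      H ⊓ LinearMap.ker (C x) ⊓ C.orthogonal (H ⊓ LinearMap.ker (C x)) :=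
    fun z hz => ⟨⟨hz.1, hz.2 x hx⟩, LinearMap.BilinForm.orthogonal_le inf_le_left hz.2⟩
  have hlt : H ⊓ C.orthogonal H <
      H ⊓ LinearMap.ker (C x) ⊓ C.orthogonal (H ⊓ LinearMap.ker (C x)) := by
    refine hle.lt_of_not_ge fun hge => hH fun y hy => ?_
    have hx' : x ∈ H ⊓ C.orthogonal H :=
      hge ⟨⟨hx, hC.self_eq_zero x⟩, fun y hy => hC.isRefl.eq_zero hy.2⟩
    exact hC.isRefl.eq_zero (hx'.2 y hy)
  have := Submodule.finrank_lt_finrank_of_lt hlt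
  have := finrank_le_finrank_inf_ker_add_one H (C x)
  omega

lemma exists_singular_vector_of_lt [IsAlgClosed k] (hA : A.IsRefl) (hB : B.IsRefl)
    {K H : Submodule k V} (hKH : K < H) (hAK : H ≤ A.orthogonal K) (hBK : H ≤ B.orthogonal K) :
    ∃ x ∈ H, x ∉ K ∧ ∃ a b : k, (a ≠ 0 ∨ b ≠ 0) ∧ ∀ y ∈ H, a * A x y + b * B x y = 0 := by
  obtain ⟨U, hdisj, hsup⟩ := IsModularLattice.exists_disjoint_and_sup_eq hKH.le
  have hU : Nontrivial U := by
    rw [Submodule.nontrivial_iff_ne_bot]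
    rintro rfl
    exact hKH.ne (by simpa using hsup)
  obtain ⟨a, b, hab, ⟨x, hxU⟩, hx, hsing⟩ := exists_smul_add_smul_apply_eq_zero
    (A.domRestrict₁₂ U U) (B.domRestrict₁₂ U U) Subspace.dual_finrank_eq.le
  have hxH : x ∈ H := hsup ▸ Submodule.mem_sup_right hxU
  refine ⟨x, hxH, fun hxK => hx ?_, a, b, hab, fun y hy => ?_⟩
  · exact Subtype.ext (Submodule.disjoint_def.mp hdisj x hxK hxU)
  · rw [← hsup] at hy
    obtain ⟨z, hz, u, hu, rfl⟩ := Submodule.mem_sup.mp hy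
    have hAz : A x z = 0 := hA.eq_zero (hAK hxH z hz)
    have hBz : B x z = 0 := hB.eq_zero (hBK hxH z hz)
    have hu : a * A x u + b * B x u = 0 := LinearMap.congr_fun hsing ⟨u, hu⟩
    simpa [hAz, hBz] using hu

-- Enlarging `K` by a singular vector `x` and shrinking `H` to the common orthogonal of `x` in `H`
-- does not decrease the sum of the dimensions of `H` and of its radical for almost all forms of the
-- pencil; when `K = H`, the space `H` is isotropic and equal to its radical.
lemma exists_isotropic_of_le [IsAlgClosed k] (hA : A.IsAlt) (hB : B.IsAlt) (K H : Submodule k V)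
    (hKH : K ≤ H) (hAK : H ≤ A.orthogonal K) (hBK : H ≤ B.orthogonal K) :
    ∃ L : Submodule k V, L ≤ A.orthogonal L ∧ L ≤ B.orthogonal L ∧ ∀ᶠ t : k in Filter.cofinite,
      Module.finrank k H + Module.finrank k ↥(H ⊓ (A + t • B).orthogonal H) ≤
        2 * Module.finrank k L := by
  induction K using WellFoundedGT.induction generalizing H with
  | ind K ih =>
  obtain rfl | hlt := hKH.eq_or_lt
  · refine ⟨K, hAK, hBK, .of_forall fun t => ?_⟩
    have := Submodule.finrank_mono (inf_le_left : K ⊓ (A + t • B).orthogonal K ≤ K)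
    omega
  obtain ⟨x, hxH, hxK, a, b, hab, hx⟩ :=
    exists_singular_vector_of_lt hA.isRefl hB.isRefl hlt hAK hBK
  have hle : K ⊔ Submodule.span k {x} ≤ H ⊓ LinearMap.ker (A x) ⊓ LinearMap.ker (B x) := by
    refine sup_le (fun z hz => ⟨⟨hKH hz, ?_⟩, ?_⟩) ?_
    · exact hA.isRefl.eq_zero (hAK hxH z hz)
    · exact hB.isRefl.eq_zero (hBK hxH z hz)
    · simpa using ⟨⟨hxH, hA.self_eq_zero x⟩, hB.self_eq_zero x⟩
  obtain ⟨L, hAL, hBL, hL⟩ := ih _ (by simpa using hxK) _ hle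
    (inf_le_left.trans (inf_ker_le_orthogonal_sup_span_singleton hAK x))
    (inf_le_inf_right _ inf_le_left |>.trans (inf_ker_le_orthogonal_sup_span_singleton hBK x))
  refine ⟨L, hAL, hBL, ?_⟩
  filter_upwards [hL, eventually_inf_ker_add_smul_eq hab hx] with t htL ht
  refine le_trans ?_ htL
  rw [← ht]
  exact finrank_add_finrank_inf_orthogonal_le (hA.add (hB.smul t)) hxH

theorem exists_isotropic_of_eventually_le_finrank_ker [IsAlgClosed k] (hA : A.IsAlt) (hB : B.IsAlt)
    {d : ℕ} (hd : ∀ᶠ t : k in Filter.cofinite, d ≤ Module.finrank k (LinearMap.ker (A + t • B))) :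
    ∃ L : Submodule k V, L ≤ A.orthogonal L ∧ L ≤ B.orthogonal L ∧
      Module.finrank k V + d ≤ 2 * Module.finrank k L := by
  obtain ⟨L, hAL, hBL, hL⟩ := exists_isotropic_of_le hA hB ⊥ ⊤ bot_le (by simp) (by simp)
  refine ⟨L, hAL, hBL, ?_⟩
  obtain ⟨t, htd, htL⟩ := (hd.and hL).exists
  have hker : LinearMap.ker (A + t • B) ≤ ⊤ ⊓ (A + t • B).orthogonal ⊤ := fun z hz =>
    ⟨trivial, fun y _ => (hA.add (hB.smul t)).isRefl.eq_zero (LinearMap.congr_fun hz y)⟩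
  have := Submodule.finrank_mono hker
  rw [finrank_top] at htL
  omega

end Isotropic

section Kronecker

variable {k K W ι : Type*} [Field k] [AddCommGroup K] [Module k K] [AddCommGroup W] [Module k W]

/-- Bases of `K` and `W` in which the pencil `a • A + b • B : K → W` is the block-diagonal matrix
with blocks `U_{ρ i}(a, b)`, i.e. is in Kronecker normal form. -/
structure IsKroneckerBasis {ρ : ι → ℕ} (A B : K →ₗ[k] W)
    (e : Module.Basis (Σ i, Fin (ρ i + 1)) k K) (w : Module.Basis (Σ i, Fin (ρ i)) k W) : Prop where
  map_castSucc : ∀ i s, A (e ⟨i, Fin.castSucc s⟩) = w ⟨i, s⟩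
  map_last : ∀ i, A (e ⟨i, Fin.last (ρ i)⟩) = 0
  map_succ : ∀ i s, B (e ⟨i, Fin.succ s⟩) = w ⟨i, s⟩
  map_zero : ∀ i, B (e ⟨i, 0⟩) = 0

lemma IsKroneckerBasis.reindex {ι' : Type*} {ρ : ι → ℕ} {A B : K →ₗ[k] W}
    {e : Module.Basis (Σ i, Fin (ρ i + 1)) k K} {w : Module.Basis (Σ i, Fin (ρ i)) k W}
    (h : IsKroneckerBasis A B e w) (τ : ι' ≃ ι) :
    IsKroneckerBasis (ρ := ρ ∘ τ) A B
      (e.reindex (Equiv.sigmaCongrLeft (β := fun i => Fin (ρ i + 1)) τ).symm)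
      (w.reindex (Equiv.sigmaCongrLeft (β := fun i => Fin (ρ i)) τ).symm) := by
  constructor <;> intros <;> simp only [Module.Basis.reindex_apply, Equiv.symm_symm]
  exacts [h.map_castSucc _ _, h.map_last _, h.map_succ _ _, h.map_zero _]

lemma IsKroneckerBasis.pos {ρ : ι → ℕ} {A B : K →ₗ[k] W}
    {e : Module.Basis (Σ i, Fin (ρ i + 1)) k K} {w : Module.Basis (Σ i, Fin (ρ i)) k W}
    (h : IsKroneckerBasis A B e w) (hAB : Disjoint (LinearMap.ker A) (LinearMap.ker B)) (i : ι) :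
    0 < ρ i := by
  by_contra! hi
  have hlast : Fin.last (ρ i) = 0 := Fin.ext (by simpa using hi)
  exact e.ne_zero ⟨i, 0⟩ (Submodule.disjoint_def.mp hAB _ (hlast ▸ h.map_last i) (h.map_zero i))

/-- Every nonzero member of the pencil spanned by `A` and `B` is surjective. -/
def IsEverywhereSurjective (A B : K →ₗ[k] W) : Prop :=
  ∀ a b : k, a ≠ 0 ∨ b ≠ 0 → Function.Surjective (a • A + b • B)

theorem IsEverywhereSurjective.finrank_lt [IsAlgClosed k] [FiniteDimensional k K]
    [FiniteDimensional k W] [Nontrivial W] {A B : K →ₗ[k] W} (h : IsEverywhereSurjective A B) :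
    Module.finrank k W < Module.finrank k K := by
  have hsurj : Function.Surjective A := by simpa using h 1 0 (Or.inl one_ne_zero)
  have : Nontrivial K := hsurj.nontrivial
  by_contra! hle
  obtain ⟨a, b, hab, x, hx, hx0⟩ := exists_smul_add_smul_apply_eq_zero A B
    (LinearMap.finrank_le_finrank_of_surjective hsurj)
  have hinj : Function.Injective (a • A + b • B) :=
    (LinearMap.injective_iff_surjective_of_finrank_eq_finrank
      (hle.antisymm (LinearMap.finrank_le_finrank_of_surjective hsurj))).mpr (h a b hab)
  exact hx (hinj (by simpa using hx0))

section Reflection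

variable (A B : K →ₗ[k] W)

/-- The target of the reflected pencil: the reflection functor for the Kronecker quiver replaces a
pencil `K ⇉ W` by the pencil `W ⇉ (W × W) / K` of the two coordinate inclusions. -/
abbrev ReflectedSpace : Type _ := (W × W) ⧸ LinearMap.range (A.prod B)

/-- The first map of the reflected pencil. -/
def reflectFst : W →ₗ[k] ReflectedSpace A B :=
  -((LinearMap.range (A.prod B)).mkQ ∘ₗ LinearMap.inr k W W)

/-- The second map of the reflected pencil. -/
def reflectSnd : W →ₗ[k] ReflectedSpace A B :=
  (LinearMap.range (A.prod B)).mkQ ∘ₗ LinearMap.inl k W W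

lemma finrank_reflectedSpace_add_finrank_range [FiniteDimensional k W] :
    Module.finrank k (ReflectedSpace A B) + Module.finrank k (LinearMap.range (A.prod B)) =
      2 * Module.finrank k W := by
  rw [Submodule.finrank_quotient_add_finrank, Module.finrank_prod, two_mul]

variable {A B}

lemma reflectFst_eq_reflectSnd_iff {p q : W} :
    reflectFst A B q = reflectSnd A B p ↔ ∃ x, A x = p ∧ B x = q := by
  rw [eq_comm, ← sub_eq_zero, reflectFst, reflectSnd, LinearMap.neg_apply, sub_neg_eq_add,
    LinearMap.comp_apply, LinearMap.comp_apply, ← map_add, Submodule.mkQ_apply,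
    Submodule.Quotient.mk_eq_zero]
  simp [Prod.ext_iff]

theorem IsEverywhereSurjective.reflect (h : IsEverywhereSurjective A B) :
    IsEverywhereSurjective (reflectFst A B) (reflectSnd A B) := by
  intro a b hab z
  obtain ⟨⟨p, q⟩, rfl⟩ := Submodule.Quotient.mk_surjective _ z
  obtain ⟨c, d, hcd⟩ := Semifield.isCoprime_iff.mpr hab
  obtain ⟨x, hx⟩ := h a b hab (a • p + b • q)
  rw [LinearMap.add_apply, LinearMap.smul_apply, LinearMap.smul_apply] at hx
  let v := d • (p - A x) - c • (q - B x)
  have hp : b • v = p - A x := by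
    linear_combination (norm := module) c • hx + hcd • (p - A x)
  have hq : a • v = B x - q := by
    linear_combination (norm := module) -(d • hx) - hcd • (q - B x)
  refine ⟨v, (Submodule.Quotient.eq _).mpr ⟨-x, ?_⟩⟩
  simp [hp, hq]

theorem IsEverywhereSurjective.finrank_reflectedSpace_lt [IsAlgClosed k]
    [FiniteDimensional k W] [Nontrivial W] (h : IsEverywhereSurjective A B) :
    Module.finrank k (ReflectedSpace A B) < Module.finrank k W := by
  have hfst_snd : IsEverywhereSurjective
      (LinearMap.fst k W W ∘ₗ (LinearMap.range (A.prod B)).subtype)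
      (LinearMap.snd k W W ∘ₗ (LinearMap.range (A.prod B)).subtype) := by
    intro a b hab y
    obtain ⟨x, rfl⟩ := h a b hab y
    exact ⟨⟨(A x, B x), x, rfl⟩, rfl⟩
  have := hfst_snd.finrank_lt
  have := finrank_reflectedSpace_add_finrank_range A B
  omega

lemma linearIndependent_sumElim_ker {ι' ι'' : Type*} {f : K →ₗ[k] W} {x : ι' → K}
    {c : ι'' → LinearMap.ker f} (hx : LinearIndependent k (f ∘ x)) (hc : LinearIndependent k c) :
    LinearIndependent k (Sum.elim x fun j => (c j : K)) := by
  refine (LinearIndependent.of_comp f hx).sum_type (hc.map' _ (Submodule.ker_subtype _)) ?_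
  refine (Submodule.range_ker_disjoint hx).mono_right (Submodule.span_le.mpr ?_)
  rintro _ ⟨j, rfl⟩
  exact (c j).2

lemma linearIndependent_prod_of_chains [Finite ι] {σ : ι → ℕ}
    (e : Module.Basis (Σ i, Fin (σ i + 1)) k W) {x : (Σ i, Fin (σ i + 1 + 1)) → K}
    (hA : ∀ i s, A (x ⟨i, Fin.castSucc s⟩) = e ⟨i, s⟩) (hA_last : ∀ i, A (x ⟨i, Fin.last _⟩) = 0)
    (hB : ∀ i s, B (x ⟨i, Fin.succ s⟩) = e ⟨i, s⟩) (hB_zero : ∀ i, B (x ⟨i, 0⟩) = 0) :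
    LinearIndependent k (A.prod B ∘ x) := by
  cases nonempty_fintype ι
  refine Fintype.linearIndependent_iff.mpr fun c hc => ?_
  have hsum : ∑ β, c β • A (x β) = 0 ∧ ∑ β, c β • B (x β) = 0 := by
    simpa [Prod.ext_iff, Prod.fst_sum, Prod.snd_sum] using hc
  have hcastSucc := Fintype.linearIndependent_iff.mp e.linearIndependent
    (fun α => c ⟨α.1, α.2.castSucc⟩) (by
      simpa [Fintype.sum_sigma, Fin.sum_univ_castSucc, hA_last, hA] using hsum.1)
  have hsucc := Fintype.linearIndependent_iff.mp e.linearIndependent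
    (fun α => c ⟨α.1, α.2.succ⟩) (by
      simpa [Fintype.sum_sigma, Fin.sum_univ_succ, hB_zero, hB] using hsum.2)
  rintro ⟨i, s⟩
  cases s using Fin.lastCases with
  | last => exact hsucc ⟨i, Fin.last _⟩
  | cast s => exact hcastSucc ⟨i, s⟩

lemma IsKroneckerBasis.exists_chains {σ : ι → ℕ} {e : Module.Basis (Σ i, Fin (σ i + 1)) k W}
    {w : Module.Basis (Σ i, Fin (σ i)) k (ReflectedSpace A B)}
    (h : IsKroneckerBasis (reflectFst A B) (reflectSnd A B) e w) :
    ∃ x : (Σ i, Fin (σ i + 1 + 1)) → K,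
      (∀ i s, A (x ⟨i, Fin.castSucc s⟩) = e ⟨i, s⟩) ∧ (∀ i, A (x ⟨i, Fin.last _⟩) = 0) ∧
      (∀ i s, B (x ⟨i, Fin.succ s⟩) = e ⟨i, s⟩) ∧ ∀ i, B (x ⟨i, 0⟩) = 0 := by
  let p (i : ι) : Fin (σ i + 1 + 1) → W := Fin.snoc (fun s => e ⟨i, s⟩) 0
  let q (i : ι) : Fin (σ i + 1 + 1) → W := Fin.cons 0 (fun s => e ⟨i, s⟩)
  have hpq : ∀ β : Σ i, Fin (σ i + 1 + 1), ∃ x, A x = p β.1 β.2 ∧ B x = q β.1 β.2 := by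
    rintro ⟨i, s⟩
    rw [← reflectFst_eq_reflectSnd_iff]
    cases s using Fin.lastCases with
    | last =>
      have hq : q i (Fin.last _) = e ⟨i, Fin.last _⟩ := rfl
      simp [p, hq, h.map_last]
    | cast s =>
      cases s using Fin.cases with
      | zero => simp [p, q, h.map_zero]
      | succ s =>
        have hp : p i s.succ.castSucc = e ⟨i, s.succ⟩ := Fin.snoc_castSucc ..
        have hq : q i s.succ.castSucc = e ⟨i, s.castSucc⟩ := rfl
        rw [hp, hq, h.map_castSucc, h.map_succ]
  choose x hA hB using hpq
  exact ⟨x, by simp [hA, p], by simp [hA, p], by simp [hB, q], by simp [hB, q]⟩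

lemma sum_add_two_add_finrank_ker_prod [FiniteDimensional k K] [FiniteDimensional k W] [Fintype ι]
    {σ : ι → ℕ} (e : Module.Basis (Σ i, Fin (σ i + 1)) k W)
    (w : Module.Basis (Σ i, Fin (σ i)) k (ReflectedSpace A B)) :
    ∑ i, (σ i + 2) + Module.finrank k (LinearMap.ker (A.prod B)) = Module.finrank k K := by
  have hC := finrank_reflectedSpace_add_finrank_range A B
  rw [Module.finrank_eq_card_basis e, Module.finrank_eq_card_basis w] at hC
  rw [← (A.prod B).finrank_range_add_finrank_ker]
  simp only [Fintype.card_sigma, Fintype.card_fin, Finset.sum_add_distrib, Finset.sum_const,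
    Finset.card_univ, smul_eq_mul, mul_one] at hC ⊢
  omega

theorem IsKroneckerBasis.lift [FiniteDimensional k K] [FiniteDimensional k W] [Finite ι]
    {σ : ι → ℕ} {e : Module.Basis (Σ i, Fin (σ i + 1)) k W}
    {w : Module.Basis (Σ i, Fin (σ i)) k (ReflectedSpace A B)}
    (h : IsKroneckerBasis (reflectFst A B) (reflectSnd A B) e w) :
    ∃ (ρ : ι ⊕ Fin (Module.finrank k (LinearMap.ker (A.prod B))) → ℕ)
      (e' : Module.Basis (Σ i, Fin (ρ i + 1)) k K) (w' : Module.Basis (Σ i, Fin (ρ i)) k W),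
      IsKroneckerBasis A B e' w' := by
  cases nonempty_fintype ι
  obtain ⟨x, hA, hA_last, hB, hB_zero⟩ := h.exists_chains
  have hDx := linearIndependent_prod_of_chains e hA hA_last hB hB_zero
  let c := Module.finBasis k (LinearMap.ker (A.prod B))
  let ρ : ι ⊕ Fin (Module.finrank k (LinearMap.ker (A.prod B))) → ℕ := Sum.elim (σ · + 1) 0
  let y : (Σ i, Fin (ρ i + 1)) → K :=
    Sum.elim x (fun j => c j.1) ∘ Equiv.sumSigmaDistrib fun i => Fin (ρ i + 1)
  have hfst : Function.Injective (Sigma.fst : (Σ j, Fin (ρ (Sum.inr j) + 1)) → _) :=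
    Equiv.injective (Equiv.sigmaUnique _ fun _ => Fin 1)
  have hy : LinearIndependent k y :=
    (linearIndependent_sumElim_ker hDx (c.linearIndependent.comp _ hfst)).comp _ (Equiv.injective _)
  have hcard : Fintype.card (Σ i, Fin (ρ i + 1)) = Module.finrank k K := by
    simp only [← sum_add_two_add_finrank_ker_prod e w, Fintype.card_sigma, Fintype.card_fin,
      Fintype.sum_sum_type]
    simp [ρ]
  have hempty : IsEmpty (Σ j, Fin (ρ (Sum.inr j))) := ⟨fun j => Fin.elim0 j.2⟩
  let w' : Module.Basis (Σ i, Fin (ρ i)) k W := e.reindex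
    ((Equiv.sumSigmaDistrib fun i => Fin (ρ i)).trans (Equiv.sumEmpty _ _)).symm
  have hw' : ∀ i s, w' ⟨Sum.inl i, s⟩ = e ⟨i, s⟩ := fun i s => e.reindex_apply _ _
  have hc : ∀ j, A (c j) = 0 ∧ B (c j) = 0 := fun j => by
    simpa using (c j).2
  refine ⟨ρ, basisOfLinearIndependentOfCardEqFinrank' y hy hcard, w', ?_, ?_, ?_, ?_⟩ <;>
    rw [coe_basisOfLinearIndependentOfCardEqFinrank']
  · rintro (i | j) s
    exacts [(hA i s).trans (hw' i s).symm, s.elim0]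
  · rintro (i | j)
    exacts [hA_last i, (hc j).1]
  · rintro (i | j) s
    exacts [(hB i s).trans (hw' i s).symm, s.elim0]
  · rintro (i | j)
    exacts [hB_zero i, (hc j).2]

end Reflection

end Kronecker

section Existence

universe u

variable {k : Type*} [Field k] [IsAlgClosed k] {W : Type u} [AddCommGroup W] [Module k W]
  [FiniteDimensional k W]

lemma IsEverywhereSurjective.exists_isKroneckerBasis_of_univ_eq {K : Type u} [AddCommGroup K]
    [Module k K] [FiniteDimensional k K] {A B : K →ₗ[k] W} (h : IsEverywhereSurjective A B) :
    ∃ (ι : Type) (_ : Fintype ι) (ρ : ι → ℕ) (e : Module.Basis (Σ i, Fin (ρ i + 1)) k K)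
      (w : Module.Basis (Σ i, Fin (ρ i)) k W), IsKroneckerBasis A B e w := by
  induction hn : Module.finrank k W using Nat.strong_induction_on generalizing K W with
  | _ n ih =>
  subst hn
  suffices hC : ∃ (ι : Type) (_ : Fintype ι) (ρ : ι → ℕ)
      (e : Module.Basis (Σ i, Fin (ρ i + 1)) k W)
      (w : Module.Basis (Σ i, Fin (ρ i)) k (ReflectedSpace A B)),
      IsKroneckerBasis (reflectFst A B) (reflectSnd A B) e w by
    obtain ⟨ι, _, σ, e, w, hew⟩ := hC
    exact ⟨_, inferInstance, hew.lift⟩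
  cases subsingleton_or_nontrivial W with
  | inl _ =>
    have : Subsingleton (ReflectedSpace A B) :=
      (Submodule.Quotient.mk_surjective _).subsingleton
    exact ⟨Empty, inferInstance, 0, .empty _, .empty _, nofun, nofun, nofun, nofun⟩
  | inr _ => exact ih _ h.finrank_reflectedSpace_lt h.reflect rfl

theorem IsEverywhereSurjective.exists_isKroneckerBasis {K : Type*} [AddCommGroup K] [Module k K]
    [FiniteDimensional k K] {A B : K →ₗ[k] W} (h : IsEverywhereSurjective A B) :
    ∃ (ι : Type) (_ : Fintype ι) (ρ : ι → ℕ) (e : Module.Basis (Σ i, Fin (ρ i + 1)) k K)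
      (w : Module.Basis (Σ i, Fin (ρ i)) k W), IsKroneckerBasis A B e w := by
  obtain ⟨ι, _, σ, e, w, hew⟩ := h.reflect.exists_isKroneckerBasis_of_univ_eq
  exact ⟨_, inferInstance, hew.lift⟩

end Existence

lemma exists_equiv_fin_antitone {ι α : Type*} [Fintype ι] [LinearOrder α] {d : ℕ}
    (hd : Fintype.card ι = d) (ρ : ι → α) : ∃ τ : Fin d ≃ ι, Antitone (ρ ∘ τ) :=
  let τ := (Fintype.equivFinOfCardEq hd).symm
  ⟨(Tuple.sort (OrderDual.toDual ∘ ρ ∘ τ)).trans τ,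
    fun _ _ hij => Tuple.monotone_sort (OrderDual.toDual ∘ ρ ∘ τ) hij⟩

theorem IsEverywhereSurjective.exists_isKroneckerBasis_antitone {k K W : Type*} [Field k]
    [IsAlgClosed k] [AddCommGroup K] [Module k K] [FiniteDimensional k K]
    [AddCommGroup W] [Module k W] [FiniteDimensional k W] {A B : K →ₗ[k] W}
    (h : IsEverywhereSurjective A B) {d : ℕ} (hd : Module.finrank k W + d = Module.finrank k K) :
    ∃ ρ : Fin d → ℕ, Antitone ρ ∧ ∃ (e : Module.Basis (Σ i, Fin (ρ i + 1)) k K)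
      (w : Module.Basis (Σ i, Fin (ρ i)) k W), IsKroneckerBasis A B e w := by
  obtain ⟨ι, _, ρ, e, w, hew⟩ := h.exists_isKroneckerBasis
  have hcard : Fintype.card ι = d := by
    rw [Module.finrank_eq_card_basis e, Module.finrank_eq_card_basis w] at hd
    simpa [Finset.sum_add_distrib] using hd.symm
  obtain ⟨τ, hτ⟩ := exists_equiv_fin_antitone hcard ρ
  exact ⟨ρ ∘ τ, hτ, _, _, hew.reindex τ⟩

section ShiftEquations

/-- The map `(i, s) ↦ (i, s)` from the rows to the columns of the block-diagonal matrix with blocks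
`U_{ρ i}(a, b)`: it gives the positions of the entries `a`. -/
def sigmaCastSucc {ι : Type*} (ρ : ι → ℕ) : (Σ i, Fin (ρ i)) → Σ i, Fin (ρ i + 1) :=
  fun α => ⟨α.1, α.2.castSucc⟩

/-- The map `(i, s) ↦ (i, s + 1)` from the rows to the columns of the block-diagonal matrix with
blocks `U_{ρ i}(a, b)`: it gives the positions of the entries `b`. -/
def sigmaSucc {ι : Type*} (ρ : ι → ℕ) : (Σ i, Fin (ρ i)) → Σ i, Fin (ρ i + 1) :=
  fun α => ⟨α.1, α.2.succ⟩

lemma sigmaCastSucc_injective {ι : Type*} (ρ : ι → ℕ) : Function.Injective (sigmaCastSucc ρ) :=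
  Function.Injective.sigma_map (β₂ := fun i => Fin (ρ i + 1)) Function.injective_id
    fun i => Fin.castSucc_injective (ρ i)

lemma sigmaSucc_injective {ι : Type*} (ρ : ι → ℕ) : Function.Injective (sigmaSucc ρ) :=
  Function.Injective.sigma_map (β₂ := fun i => Fin (ρ i + 1)) Function.injective_id
    fun i => Fin.succ_injective (ρ i)

lemma sigmaCastSucc_ne_last {ι : Type*} {ρ : ι → ℕ} (α : Σ i, Fin (ρ i)) (i : ι) :
    sigmaCastSucc ρ α ≠ ⟨i, Fin.last (ρ i)⟩ := by
  rcases α with ⟨j, t⟩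
  intro h
  obtain ⟨rfl, h⟩ := Sigma.mk.inj_iff.mp h
  exact (Fin.castSucc_lt_last t).ne (eq_of_heq h)

lemma sigmaSucc_ne_zero {ι : Type*} {ρ : ι → ℕ} (α : Σ i, Fin (ρ i)) (i : ι) :
    sigmaSucc ρ α ≠ ⟨i, 0⟩ := by
  rcases α with ⟨j, t⟩
  intro h
  obtain ⟨rfl, h⟩ := Sigma.mk.inj_iff.mp h
  exact Fin.succ_ne_zero t (eq_of_heq h)

lemma sigmaCastSucc_ne_sigmaSucc {ι : Type*} {ρ : ι → ℕ} (α : Σ i, Fin (ρ i)) :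
    sigmaCastSucc ρ α ≠ sigmaSucc ρ α := fun h =>
  Fin.castSucc_lt_succ.ne (eq_of_heq (Sigma.mk.inj_iff.mp h).2)

/-- The block-diagonal matrix with blocks `U_{ρ i}(1, 0)`. -/
def kroneckerFst (R : Type*) {ι : Type*} [Zero R] [One R] [DecidableEq ι] (ρ : ι → ℕ) :
    Matrix (Σ i, Fin (ρ i)) (Σ i, Fin (ρ i + 1)) R :=
  (1 : Matrix (Σ i, Fin (ρ i + 1)) (Σ i, Fin (ρ i + 1)) R).submatrix (sigmaCastSucc ρ) id

/-- The block-diagonal matrix with blocks `U_{ρ i}(0, 1)`. -/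
def kroneckerSnd (R : Type*) {ι : Type*} [Zero R] [One R] [DecidableEq ι] (ρ : ι → ℕ) :
    Matrix (Σ i, Fin (ρ i)) (Σ i, Fin (ρ i + 1)) R :=
  (1 : Matrix (Σ i, Fin (ρ i + 1)) (Σ i, Fin (ρ i + 1)) R).submatrix (sigmaSucc ρ) id

variable {ι R : Type*} [CommRing R]

lemma kroneckerFst_submatrix_sigmaCastSucc [DecidableEq ι] (ρ : ι → ℕ) :
    (kroneckerFst R ρ).submatrix id (sigmaCastSucc ρ) = 1 :=
  submatrix_one _ (sigmaCastSucc_injective ρ)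

lemma kroneckerSnd_submatrix_sigmaSucc [DecidableEq ι] (ρ : ι → ℕ) :
    (kroneckerSnd R ρ).submatrix id (sigmaSucc ρ) = 1 :=
  submatrix_one _ (sigmaSucc_injective ρ)

lemma fromBlocks_mul_fromBlocks_neg_transpose_mul {m n : Type*} [Fintype m] [Fintype n]
    [DecidableEq m] [DecidableEq n] (G : Matrix m m R) (F : Matrix m n R) (Y : Matrix n m R) :
    fromBlocks 1 (-Yᵀ) 0 1 * fromBlocks G F (-Fᵀ) 0 * (fromBlocks 1 (-Yᵀ) 0 1)ᵀ =
      fromBlocks (G - (F * Y - (F * Y)ᵀ)) F (-Fᵀ) 0 := by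
  simp only [fromBlocks_transpose, fromBlocks_multiply, transpose_mul]
  congr 1 <;> simp
  abel

lemma kroneckerFst_mul [Fintype ι] [DecidableEq ι] {n : Type*} (ρ : ι → ℕ)
    (Y : Matrix (Σ i, Fin (ρ i + 1)) n R) :
    kroneckerFst R ρ * Y = Y.submatrix (sigmaCastSucc ρ) id :=
  one_submatrix_mul _ (Equiv.refl _) _

lemma kroneckerSnd_mul [Fintype ι] [DecidableEq ι] {n : Type*} (ρ : ι → ℕ)
    (Y : Matrix (Σ i, Fin (ρ i + 1)) n R) :
    kroneckerSnd R ρ * Y = Y.submatrix (sigmaSucc ρ) id :=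
  one_submatrix_mul _ (Equiv.refl _) _

variable [Invertible (2 : R)]

-- The symmetric part of `Y` satisfies a recursion in `s` that can be solved from any initial value.
lemma exists_sub_swap_eq (G H : ι → ι → ℕ → ℕ → R) (hG : ∀ i j s t, G j i t s = -G i j s t)
    (hH : ∀ i j s t, H j i t s = -H i j s t) :
    ∃ Y : ι → ι → ℕ → ℕ → R, (∀ i j s t, Y i j s t - Y j i t s = G i j s t) ∧
      ∀ i j s t, Y i j (s + 1) t - Y j i (t + 1) s = H i j s t := by
  let Z (i j : ι) (s : ℕ) : ℕ → R :=
    s.rec 0 fun s z t => z (t + 1) + H i j s t - G i j s (t + 1)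
  have hZ : ∀ i j s t, Z i j (s + 1) t = Z i j s (t + 1) + H i j s t - G i j s (t + 1) :=
    fun _ _ _ _ => rfl
  refine ⟨fun i j s t => ⅟2 * (G i j s t + Z i j s t + Z j i t s), fun i j s t => ?_,
    fun i j s t => ?_⟩
  · linear_combination -⅟2 * hG i j s t + G i j s t * invOf_mul_self (2 : R)
  · linear_combination ⅟2 * hZ i j s t - ⅟2 * hZ j i t s - ⅟2 * hH i j s t
      - ⅟2 * hG i j s (t + 1) + ⅟2 * hG j i t (s + 1) + H i j s t * invOf_mul_self (2 : R)

theorem exists_kroneckerFst_mul_sub_transpose_eq [Fintype ι] [DecidableEq ι] {ρ : ι → ℕ}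
    {G H : Matrix (Σ i, Fin (ρ i)) (Σ i, Fin (ρ i)) R} (hG : Gᵀ = -G) (hH : Hᵀ = -H) :
    ∃ Y : Matrix (Σ i, Fin (ρ i + 1)) (Σ i, Fin (ρ i)) R,
      kroneckerFst R ρ * Y - (kroneckerFst R ρ * Y)ᵀ = G ∧
        kroneckerSnd R ρ * Y - (kroneckerSnd R ρ * Y)ᵀ = H := by
  let extend (P : Matrix (Σ i, Fin (ρ i)) (Σ i, Fin (ρ i)) R) (i j : ι) (s t : ℕ) : R :=
    if h : s < ρ i ∧ t < ρ j then P ⟨i, s, h.1⟩ ⟨j, t, h.2⟩ else 0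
  have hextend : ∀ P : Matrix (Σ i, Fin (ρ i)) (Σ i, Fin (ρ i)) R, Pᵀ = -P →
      ∀ i j s t, extend P j i t s = -extend P i j s t := fun P hP i j s t => by
    by_cases h : s < ρ i ∧ t < ρ j
    · simpa [extend, h, h.symm] using congrFun₂ hP ⟨i, s, h.1⟩ ⟨j, t, h.2⟩
    · simp [extend, h, mt And.symm h]
  obtain ⟨Y, hYG, hYH⟩ := exists_sub_swap_eq _ _ (hextend G hG) (hextend H hH)
  refine ⟨.of fun p q => Y p.1 q.1 p.2 q.2, ?_, ?_⟩
  · ext ⟨i, s⟩ ⟨j, t⟩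
    simpa [extend, kroneckerFst_mul, sigmaCastSucc] using hYG i j s t
  · ext ⟨i, s⟩ ⟨j, t⟩
    simpa [extend, kroneckerSnd_mul, sigmaSucc] using hYH i j s t

theorem exists_isUnit_mul_fromBlocks_mul_transpose [Fintype ι] [DecidableEq ι] {ρ : ι → ℕ}
    {G H : Matrix (Σ i, Fin (ρ i)) (Σ i, Fin (ρ i)) R} (hG : Gᵀ = -G) (hH : Hᵀ = -H) :
    ∃ P, IsUnit P ∧
      P * fromBlocks G (kroneckerFst R ρ) (-(kroneckerFst R ρ)ᵀ) 0 * Pᵀ =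
        fromBlocks 0 (kroneckerFst R ρ) (-(kroneckerFst R ρ)ᵀ) 0 ∧
      P * fromBlocks H (kroneckerSnd R ρ) (-(kroneckerSnd R ρ)ᵀ) 0 * Pᵀ =
        fromBlocks 0 (kroneckerSnd R ρ) (-(kroneckerSnd R ρ)ᵀ) 0 := by
  obtain ⟨Y, hYG, hYH⟩ := exists_kroneckerFst_mul_sub_transpose_eq hG hH
  refine ⟨fromBlocks 1 (-Yᵀ) 0 1, ?_, ?_, ?_⟩
  · rw [isUnit_iff_isUnit_det, det_fromBlocks_zero₂₁]
    simp
  · rw [fromBlocks_mul_fromBlocks_neg_transpose_mul, sub_eq_zero.mpr hYG.symm]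
  · rw [fromBlocks_mul_fromBlocks_neg_transpose_mul, sub_eq_zero.mpr hYH.symm]

end ShiftEquations

section ComplementPairing

variable {k V : Type*} [Field k] [AddCommGroup V] [Module k V]

/-- The pairing `x ↦ (y ↦ C y x)` between two subspaces `L` and `Q` given by a bilinear form, as a
map `L → Q*`. -/
def bilinPairing (C : LinearMap.BilinForm k V) (L Q : Submodule k V) : L →ₗ[k] Module.Dual k Q :=
  C.flip.domRestrict₁₂ L Q

lemma bilinPairing_apply (C : LinearMap.BilinForm k V) {L Q : Submodule k V} (x : L) (y : Q) :
    bilinPairing C L Q x y = C y x :=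
  rfl

lemma map_subtype_ker_bilinPairing_le {C : LinearMap.BilinForm k V} (hC : C.IsAlt)
    {L Q : Submodule k V} (hL : L ≤ C.orthogonal L) (hLQ : Codisjoint L Q) :
    (LinearMap.ker (bilinPairing C L Q)).map L.subtype ≤ LinearMap.ker C := by
  rintro _ ⟨x, hx, rfl⟩
  refine LinearMap.ext_on_codisjoint hLQ (fun z hz => hL hz x x.2) fun y hy => ?_
  simpa using hC.isRefl.eq_zero (LinearMap.congr_fun hx ⟨y, hy⟩)

lemma finrank_ker_bilinPairing_le [FiniteDimensional k V] {C : LinearMap.BilinForm k V}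
    (hC : C.IsAlt) {L Q : Submodule k V} (hL : L ≤ C.orthogonal L) (hLQ : Codisjoint L Q) :
    Module.finrank k (LinearMap.ker (bilinPairing C L Q)) ≤
      Module.finrank k (LinearMap.ker C) := by
  rw [← Submodule.finrank_map_subtype_eq]
  exact Submodule.finrank_mono (map_subtype_ker_bilinPairing_le hC hL hLQ)

lemma disjoint_ker_bilinPairing {A B : LinearMap.BilinForm k V} (hA : A.IsAlt) (hB : B.IsAlt)
    (hAB : Disjoint (LinearMap.ker A) (LinearMap.ker B)) {L Q : Submodule k V}
    (hLA : L ≤ A.orthogonal L) (hLB : L ≤ B.orthogonal L) (hLQ : Codisjoint L Q) :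
    Disjoint (LinearMap.ker (bilinPairing A L Q)) (LinearMap.ker (bilinPairing B L Q)) := by
  rw [Submodule.disjoint_def]
  intro x hxA hxB
  exact Subtype.ext (Submodule.disjoint_def.mp hAB x
    (map_subtype_ker_bilinPairing_le hA hLA hLQ ⟨x, hxA, rfl⟩)
    (map_subtype_ker_bilinPairing_le hB hLB hLQ ⟨x, hxB, rfl⟩))

lemma bilinPairing_surjective_and_finrank_add_eq [FiniteDimensional k V]
    (C : LinearMap.BilinForm k V) {L Q : Submodule k V} (hLQ : IsCompl L Q) {d : ℕ}
    (hd : Module.finrank k V + d ≤ 2 * Module.finrank k L)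
    (hC : Module.finrank k (LinearMap.ker (bilinPairing C L Q)) ≤ d) :
    Function.Surjective (bilinPairing C L Q) ∧
      Module.finrank k (Module.Dual k Q) + d = Module.finrank k L := by
  have hsum := Submodule.finrank_add_eq_of_isCompl hLQ
  have hdual : Module.finrank k (Module.Dual k Q) = Module.finrank k Q := Subspace.dual_finrank_eq
  have hrank := (bilinPairing C L Q).finrank_range_add_finrank_ker
  have hle := (LinearMap.range (bilinPairing C L Q)).finrank_le
  exact ⟨LinearMap.range_eq_top.mp (Submodule.eq_top_of_finrank_eq (by omega)), by omega⟩

variable [FiniteDimensional k V] {I J : Type*} [DecidableEq J]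

/-- The basis of `V = Q ⊕ L` made of the dual basis of a basis of `Q*` and of a basis of `L`. -/
noncomputable def adaptedBasis [Finite J] {L Q : Submodule k V} (hQL : IsCompl Q L)
    (w : Module.Basis J k (Module.Dual k Q)) (e : Module.Basis I k L) :
    Module.Basis (J ⊕ I) k V :=
  ((w.dualBasis.map (Module.evalEquiv k Q).symm).prod e).map
    (Submodule.prodEquivOfIsCompl Q L hQL)

lemma toMatrix_adaptedBasis [Fintype I] [DecidableEq I] [Fintype J]
    {C : LinearMap.BilinForm k V} (hC : C.IsAlt) {L Q : Submodule k V} (hL : L ≤ C.orthogonal L)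
    (hQL : IsCompl Q L) (w : Module.Basis J k (Module.Dual k Q)) (e : Module.Basis I k L) :
    ∃ G : Matrix J J k, Gᵀ = -G ∧ LinearMap.BilinForm.toMatrix (adaptedBasis hQL w e) C =
      fromBlocks G (LinearMap.toMatrix e w (bilinPairing C L Q))
        (-(LinearMap.toMatrix e w (bilinPairing C L Q))ᵀ) 0 := by
  let q := w.dualBasis.map (Module.evalEquiv k Q).symm
  have hentry : ∀ α c, LinearMap.toMatrix e w (bilinPairing C L Q) α c = C (q α) (e c) := by
    intro α c
    rw [← bilinPairing_apply, LinearMap.toMatrix_apply]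
    simp [q]
  refine ⟨.of fun α β => C (q α) (q β), ?_, ?_⟩
  · ext α β
    exact (hC.neg_eq _ _).symm
  · ext (α | c) (β | c')
    · simp [adaptedBasis, q]
    · simp [adaptedBasis, q, hentry]
    · simpa [adaptedBasis, q, hentry] using (hC.neg_eq _ _).symm
    · simpa [adaptedBasis] using hL (e c').2 (e c) (e c).2

end ComplementPairing

section KroneckerMatrices

variable {k K W ι : Type*} [Field k] [AddCommGroup K] [Module k K] [AddCommGroup W] [Module k W]
  [Fintype ι] [DecidableEq ι] {ρ : ι → ℕ} {A B : K →ₗ[k] W}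
  {e : Module.Basis (Σ i, Fin (ρ i + 1)) k K} {w : Module.Basis (Σ i, Fin (ρ i)) k W}

lemma IsKroneckerBasis.toMatrix_fst (h : IsKroneckerBasis A B e w) :
    LinearMap.toMatrix e w A = kroneckerFst k ρ := by
  ext α ⟨i, s⟩
  induction s using Fin.lastCases with
  | last => simp [LinearMap.toMatrix_apply, kroneckerFst, h.map_last, sigmaCastSucc_ne_last]
  | cast s =>
    have hone := congrFun₂ (kroneckerFst_submatrix_sigmaCastSucc (R := k) ρ) α ⟨i, s⟩
    rw [LinearMap.toMatrix_apply, h.map_castSucc, w.repr_self, Finsupp.single_apply]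
    simpa [sigmaCastSucc, Matrix.one_apply, eq_comm] using hone.symm

lemma IsKroneckerBasis.toMatrix_snd (h : IsKroneckerBasis A B e w) :
    LinearMap.toMatrix e w B = kroneckerSnd k ρ := by
  ext α ⟨i, s⟩
  induction s using Fin.cases with
  | zero => simp [LinearMap.toMatrix_apply, kroneckerSnd, h.map_zero, sigmaSucc_ne_zero]
  | succ s =>
    have hone := congrFun₂ (kroneckerSnd_submatrix_sigmaSucc (R := k) ρ) α ⟨i, s⟩
    rw [LinearMap.toMatrix_apply, h.map_succ, w.repr_self, Finsupp.single_apply]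
    simpa [sigmaSucc, Matrix.one_apply, eq_comm] using hone.symm

end KroneckerMatrices

theorem exists_toMatrix_eq_fromBlocks {k V : Type*} [Field k] [IsAlgClosed k]
    [AddCommGroup V] [Module k V] [FiniteDimensional k V] {A B : LinearMap.BilinForm k V}
    (hA : A.IsAlt) (hB : B.IsAlt) {d : ℕ}
    (hd : ∀ a b : k, a ≠ 0 ∨ b ≠ 0 → Module.finrank k (LinearMap.ker (a • A + b • B)) = d)
    (hAB : Disjoint (LinearMap.ker A) (LinearMap.ker B)) :
    ∃ ρ : Fin d → ℕ, Antitone ρ ∧ (∀ i, 0 < ρ i) ∧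
      ∃ v : Module.Basis ((Σ i, Fin (ρ i)) ⊕ Σ i, Fin (ρ i + 1)) k V,
        (∃ G, Gᵀ = -G ∧ LinearMap.BilinForm.toMatrix v A =
          fromBlocks G (kroneckerFst k ρ) (-(kroneckerFst k ρ)ᵀ) 0) ∧
        ∃ G, Gᵀ = -G ∧ LinearMap.BilinForm.toMatrix v B =
          fromBlocks G (kroneckerSnd k ρ) (-(kroneckerSnd k ρ)ᵀ) 0 := by
  obtain ⟨L, hLA, hLB, hL⟩ := exists_isotropic_of_eventually_le_finrank_ker hA hB (d := d)
    (.of_forall fun t => (one_smul k A ▸ hd 1 t (Or.inl one_ne_zero)).ge)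
  obtain ⟨Q, hLQ⟩ := L.exists_isCompl
  have hpencil (a b : k) (hab : a ≠ 0 ∨ b ≠ 0) := by
    have hL' : L ≤ (a • A + b • B).orthogonal L := fun z hz x hx => by
      have hAz : A x z = 0 := hLA hz x hx
      have hBz : B x z = 0 := hLB hz x hx
      change a * A x z + b * B x z = 0
      rw [hAz, hBz, mul_zero, mul_zero, add_zero]
    exact bilinPairing_surjective_and_finrank_add_eq (a • A + b • B) hLQ hL
      ((finrank_ker_bilinPairing_le ((hA.smul a).add (hB.smul b)) hL' hLQ.codisjoint).trans
        (hd a b hab).le)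
  have hsurj : IsEverywhereSurjective (bilinPairing A L Q) (bilinPairing B L Q) :=
    fun a b hab => (hpencil a b hab).1
  obtain ⟨ρ, hρ, e, w, hew⟩ :=
    hsurj.exists_isKroneckerBasis_antitone (hpencil 1 0 (Or.inl one_ne_zero)).2
  refine ⟨ρ, hρ, hew.pos (disjoint_ker_bilinPairing hA hB hAB hLA hLB hLQ.codisjoint),
    adaptedBasis hLQ.symm w e, ?_, ?_⟩
  · rw [← hew.toMatrix_fst]
    exact toMatrix_adaptedBasis hA hLA hLQ.symm w e
  · rw [← hew.toMatrix_snd]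
    exact toMatrix_adaptedBasis hB hLB hLQ.symm w e

section SkewMatrices

variable {k n : Type*} [Field k] [Fintype n] [DecidableEq n]

lemma toBilin'_isAlt [NeZero (2 : k)] {A : Matrix n n k} (hA : Aᵀ = -A) :
    (Matrix.toBilin' A).IsAlt := fun x => by
  have hneg : x ⬝ᵥ A *ᵥ x = -(x ⬝ᵥ A *ᵥ x) := by
    nth_rw 1 [dotProduct_mulVec, ← mulVec_transpose, hA, neg_mulVec, neg_dotProduct,
      dotProduct_comm]
  rw [Matrix.toBilin'_apply']
  exact (mul_eq_zero.mp (by linear_combination hneg)).resolve_left (two_ne_zero (α := k))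

lemma ker_toBilin' {A : Matrix n n k} (hA : Aᵀ = -A) :
    LinearMap.ker (Matrix.toBilin' A) = LinearMap.ker A.mulVecLin := by
  ext x
  have hx (y : n → k) : Matrix.toBilin' A x y = -(A *ᵥ x) ⬝ᵥ y := by
    rw [Matrix.toBilin'_apply', dotProduct_mulVec, ← mulVec_transpose, hA, neg_mulVec]
  simp [LinearMap.ext_iff, hx, dotProduct_eq_zero_iff]

lemma exists_isUnit_mul_mul_transpose_eq_toMatrix {m : Type*} [Fintype m] [DecidableEq m]
    (v : Module.Basis m k (n → k)) (E : m ≃ n) :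
    ∃ S : Matrix n n k, IsUnit S ∧ ∀ A : Matrix n n k,
      S * A * Sᵀ = Matrix.reindex E E (LinearMap.BilinForm.toMatrix v (Matrix.toBilin' A)) := by
  have := (Pi.basisFun k n).invertibleToMatrix (v.reindex E)
  refine ⟨((Pi.basisFun k n).toMatrix (v.reindex E))ᵀ, isUnit_of_invertible _, fun A => ?_⟩
  have hA : LinearMap.BilinForm.toMatrix (Pi.basisFun k n) (Matrix.toBilin' A) = A := by
    rw [LinearMap.BilinForm.toMatrix_basisFun, LinearMap.BilinForm.toMatrix'_toBilin']
  nth_rw 1 [transpose_transpose, ← hA, LinearMap.BilinForm.toMatrix_mul_basis_toMatrix]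
  ext i j
  simp [LinearMap.BilinForm.toMatrix_apply]

end SkewMatrices

theorem exists_isUnit_mul_mul_transpose_eq_fromBlocks {k n : Type*} [Field k] [IsAlgClosed k]
    [NeZero (2 : k)] [Fintype n] [DecidableEq n] {A B : Matrix n n k} (hA : Aᵀ = -A) (hB : Bᵀ = -B)
    {d : ℕ} (hd : ∀ a b : k, a ≠ 0 ∨ b ≠ 0 → (a • A + b • B).rank + d = Fintype.card n)
    (hAB : Disjoint (LinearMap.ker A.mulVecLin) (LinearMap.ker B.mulVecLin)) :
    ∃ ρ : Fin d → ℕ, Antitone ρ ∧ (∀ i, 0 < ρ i) ∧ Fintype.card n = 2 * ∑ i, ρ i + d ∧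
      ∀ E : (Σ i, Fin (ρ i)) ⊕ (Σ i, Fin (ρ i + 1)) ≃ n, ∃ S, IsUnit S ∧
        S * A * Sᵀ =
          reindex E E (fromBlocks 0 (kroneckerFst k ρ) (-(kroneckerFst k ρ)ᵀ) 0) ∧
        S * B * Sᵀ =
          reindex E E (fromBlocks 0 (kroneckerSnd k ρ) (-(kroneckerSnd k ρ)ᵀ) 0) := by
  have hker (a b : k) (hab : a ≠ 0 ∨ b ≠ 0) : Module.finrank k
      (LinearMap.ker (a • Matrix.toBilin' A + b • Matrix.toBilin' B)) = d := by
    have hskew : (a • A + b • B)ᵀ = -(a • A + b • B) := by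
      simp only [transpose_add, transpose_smul, hA, hB, smul_neg, neg_add]
    have hrank := (a • A + b • B).mulVecLin.finrank_range_add_finrank_ker
    rw [← map_smul, ← map_smul, ← map_add, ker_toBilin' hskew]
    rw [Module.finrank_fintype_fun_eq_card, ← hd a b hab] at hrank
    exact Nat.add_left_cancel hrank
  obtain ⟨ρ, hρ, hpos, v, ⟨G, hG, hvA⟩, H, hH, hvB⟩ := exists_toMatrix_eq_fromBlocks
    (toBilin'_isAlt hA) (toBilin'_isAlt hB) hker (by rwa [ker_toBilin' hA, ker_toBilin' hB])
  refine ⟨ρ, hρ, hpos, ?_, fun E => ?_⟩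
  · have hcard := (Module.finrank_fintype_fun_eq_card k).symm.trans (Module.finrank_eq_card_basis v)
    simp only [Fintype.card_sum, Fintype.card_sigma, Fintype.card_fin, Finset.sum_add_distrib,
      Finset.sum_const, Finset.card_univ, smul_eq_mul, mul_one] at hcard
    omega
  have := invertibleOfNonzero (two_ne_zero (α := k))
  obtain ⟨P, hP, hPG, hPH⟩ := exists_isUnit_mul_fromBlocks_mul_transpose hG hH
  obtain ⟨S, hS, hSv⟩ := exists_isUnit_mul_mul_transpose_eq_toMatrix v E
  have hmul (C : Matrix n n k) : reindexAlgEquiv k k E P * S * C * (reindexAlgEquiv k k E P * S)ᵀ =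
      reindex E E (P * LinearMap.BilinForm.toMatrix v (Matrix.toBilin' C) * Pᵀ) := by
    let R := reindexAlgEquiv k k E
    calc R P * S * C * (R P * S)ᵀ = R P * (S * C * Sᵀ) * (R P)ᵀ := by
          simp only [transpose_mul, Matrix.mul_assoc]
      _ = R P * R (LinearMap.BilinForm.toMatrix v (Matrix.toBilin' C)) * R Pᵀ := by
          rw [hSv]
          rfl
      _ = R (P * LinearMap.BilinForm.toMatrix v (Matrix.toBilin' C) * Pᵀ) := by
          rw [map_mul, map_mul]
  refine ⟨reindexAlgEquiv k k E P * S, (hP.map _).mul hS, ?_, ?_⟩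
  · rw [hmul, hvA, hPG]
  · rw [hmul, hvB, hPH]

section StandardPencil

variable {h r : ℕ} {ρ : Fin h → ℕ}

lemma partialSum_mono : Monotone (partialSum ρ) := fun _ _ hab =>
  Finset.sum_le_sum_of_subset (Finset.range_mono hab)

lemma partialSum_succ (i : Fin h) : partialSum ρ (i + 1) = partialSum ρ i + ρ i := by
  simp [partialSum, Finset.sum_range_succ]

lemma partialSum_eq_sum_castLE (i : Fin h) :
    partialSum ρ i = ∑ j : Fin i, ρ (Fin.castLE i.is_lt.le j) := by
  rw [partialSum, Finset.sum_range]
  exact Finset.sum_congr rfl fun j _ => dif_pos (j.is_lt.trans i.is_lt)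

/-- The position `r₁ + ⋯ + r_i + s` of the row `(i, s)` of the block-diagonal matrix `F̄`. -/
def rowEquiv (hρ : ∑ i, ρ i = r) : (Σ i, Fin (ρ i)) ≃ Fin r :=
  finSigmaFinEquiv.trans (finCongr hρ)

/-- The position `(r₁ + 1) + ⋯ + (r_i + 1) + s` of the column `(i, s)` of the block-diagonal matrix
`F̄`. -/
def colEquiv (hρ : ∑ i, ρ i = r) : (Σ i, Fin (ρ i + 1)) ≃ Fin (r + h) :=
  finSigmaFinEquiv.trans (finCongr (by simp [Finset.sum_add_distrib, hρ]))

lemma val_rowEquiv (hρ : ∑ i, ρ i = r) (α : Σ i, Fin (ρ i)) :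
    (rowEquiv hρ α : ℕ) = partialSum ρ α.1 + α.2 := by
  rw [partialSum_eq_sum_castLE]
  exact finSigmaFinEquiv_apply α

lemma val_colEquiv (hρ : ∑ i, ρ i = r) (c : Σ i, Fin (ρ i + 1)) :
    (colEquiv hρ c : ℕ) = partialSum ρ c.1 + c.1 + c.2 := by
  rw [partialSum_eq_sum_castLE]
  exact (finSigmaFinEquiv_apply c).trans (by simp [Finset.sum_add_distrib])

lemma partialSum_le_val_rowEquiv_lt_iff (hρ : ∑ i, ρ i = r) (α : Σ i, Fin (ρ i)) (i : Fin h) :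
    partialSum ρ i ≤ rowEquiv hρ α ∧ rowEquiv hρ α < partialSum ρ (i + 1) ↔ i = α.1 := by
  have hα := partialSum_succ (ρ := ρ) α.1
  rw [val_rowEquiv]
  constructor
  · rintro ⟨hle, hlt⟩
    by_contra hne
    rcases lt_or_gt_of_ne hne with hi | hi
    · have := partialSum_mono (ρ := ρ) (Nat.add_one_le_of_lt (Fin.lt_def.mp hi))
      omega
    · have := partialSum_mono (ρ := ρ) (Nat.add_one_le_of_lt (Fin.lt_def.mp hi))
      omega
  · rintro rfl
    omega

lemma exists_partialSum_le_val_rowEquiv_lt_and_iff (hρ : ∑ i, ρ i = r) (α : Σ i, Fin (ρ i))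
    (P : Fin h → Prop) :
    (∃ i : Fin h, partialSum ρ i ≤ rowEquiv hρ α ∧ rowEquiv hρ α < partialSum ρ (i + 1) ∧ P i) ↔
      P α.1 := by
  simp only [← and_assoc, partialSum_le_val_rowEquiv_lt_iff, exists_eq_left]

lemma val_colEquiv_sigmaCastSucc (hρ : ∑ i, ρ i = r) (α : Σ i, Fin (ρ i)) :
    (colEquiv hρ (sigmaCastSucc ρ α) : ℕ) = rowEquiv hρ α + α.1 := by
  rw [val_colEquiv, val_rowEquiv, add_right_comm]
  rfl

lemma val_colEquiv_sigmaSucc (hρ : ∑ i, ρ i = r) (α : Σ i, Fin (ρ i)) :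
    (colEquiv hρ (sigmaSucc ρ α) : ℕ) = rowEquiv hρ α + α.1 + 1 := by
  rw [val_colEquiv, val_rowEquiv, add_right_comm _ (α.2 : ℕ)]
  rfl

lemma Fbar_rowEquiv_colEquiv (hρ : ∑ i, ρ i = r) (a b : ℂ) (α : Σ i, Fin (ρ i))
    (c : Σ i, Fin (ρ i + 1)) :
    Fbar ρ r (r + h) a b (rowEquiv hρ α) (colEquiv hρ c) =
      if sigmaCastSucc ρ α = c then a else if sigmaSucc ρ α = c then b else 0 := by
  have hfst := exists_partialSum_le_val_rowEquiv_lt_and_iff hρ α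
    fun i => (colEquiv hρ c : ℕ) = rowEquiv hρ α + i
  have hsnd := exists_partialSum_le_val_rowEquiv_lt_and_iff hρ α
    fun i => (colEquiv hρ c : ℕ) = rowEquiv hρ α + i + 1
  rw [← val_colEquiv_sigmaCastSucc, ← Fin.ext_iff, EmbeddingLike.apply_eq_iff_eq, eq_comm] at hfst
  rw [← val_colEquiv_sigmaSucc, ← Fin.ext_iff, EmbeddingLike.apply_eq_iff_eq, eq_comm] at hsnd
  simp only [Fbar, of_apply, hfst, hsnd]

lemma submatrix_Fbar_one_zero (hρ : ∑ i, ρ i = r) :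
    (Fbar ρ r (r + h) 1 0).submatrix (rowEquiv hρ) (colEquiv hρ) = kroneckerFst ℂ ρ := by
  ext α c
  simp [Fbar_rowEquiv_colEquiv, kroneckerFst, one_apply]

lemma submatrix_Fbar_zero_one (hρ : ∑ i, ρ i = r) :
    (Fbar ρ r (r + h) 0 1).submatrix (rowEquiv hρ) (colEquiv hρ) = kroneckerSnd ℂ ρ := by
  ext α c
  have hα (hc : sigmaCastSucc ρ α = c) : sigmaSucc ρ α ≠ c :=
    fun hc' => sigmaCastSucc_ne_sigmaSucc α (hc.trans hc'.symm)
  simp only [submatrix_apply, Fbar_rowEquiv_colEquiv, kroneckerSnd, one_apply, id]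
  grind

/-- The position of the rows and columns of the pencil `F_λ`. -/
def pencilEquiv (hρ : ∑ i, ρ i = r) :
    (Σ i, Fin (ρ i)) ⊕ (Σ i, Fin (ρ i + 1)) ≃ Fin (2 * r + h) :=
  ((rowEquiv hρ).sumCongr (colEquiv hρ)).trans (finSumFinEquiv.trans (finCongr (by omega)))

lemma Fpencil_eq_reindex (hρ : ∑ i, ρ i = r) (a b : ℂ) :
    Fpencil ρ r a b = reindex (pencilEquiv hρ) (pencilEquiv hρ)
      (fromBlocks 0 ((Fbar ρ r (r + h) a b).submatrix (rowEquiv hρ) (colEquiv hρ))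
        (-((Fbar ρ r (r + h) a b).submatrix (rowEquiv hρ) (colEquiv hρ))ᵀ) 0) := by
  ext p q
  obtain ⟨x, rfl⟩ := (pencilEquiv hρ).surjective p
  obtain ⟨y, rfl⟩ := (pencilEquiv hρ).surjective q
  rw [reindex_apply, submatrix_apply, Equiv.symm_apply_apply, Equiv.symm_apply_apply]
  rcases x with α | c <;> rcases y with β | d <;> simp [Fpencil, pencilEquiv]

end StandardPencil

lemma exists_linearIndependent_pair_span_eq {k E : Type*} [Field k] [AddCommGroup E] [Module k E]
    (M : Submodule k E) (hM : Module.finrank k M = 2) :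
    ∃ x y : E, LinearIndependent k ![x, y] ∧ Submodule.span k {x, y} = M := by
  have : Module.Finite k M := Module.finite_of_finrank_eq_succ hM
  let b := Module.finBasisOfFinrankEq k M hM
  have hb : ![(b 0 : E), b 1] = M.subtype ∘ b := funext fun i => by fin_cases i <;> rfl
  refine ⟨b 0, b 1, hb ▸ b.linearIndependent.map' M.subtype M.ker_subtype, ?_⟩
  rw [← Matrix.range_cons_cons_empty _ _ ![], hb, Set.range_comp, ← Submodule.map_span, b.span_eq,
    Submodule.map_top, M.range_subtype]

lemma ker_mulVecLin_inf_le_iInf {k m n : Type*} [Field k] [Fintype n] (A B : Matrix m n k) :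
    LinearMap.ker A.mulVecLin ⊓ LinearMap.ker B.mulVecLin ≤
      ⨅ C ∈ Submodule.span k {A, B}, LinearMap.ker C.mulVecLin := by
  rintro x ⟨hA, hB⟩
  simp only [Submodule.mem_iInf, Submodule.mem_span_pair]
  rintro _ ⟨a, b, rfl⟩
  have hAx : A *ᵥ x = 0 := hA
  have hBx : B *ᵥ x = 0 := hB
  simp [hAx, hBx]

/-- Every nondegenerate 2-dimensional space of skew-symmetric
`(N+1)×(N+1)` complex matrices of constant rank `2r` is congruent to a standard
pencil `F_λ` for some partition `λ` of `r` of length `h = N+1-2r`. -/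
theorem stmt_4 (r N : ℕ) (hr : 1 ≤ r) (hN : 2*r ≤ N)
    (M : Submodule ℂ (Matrix (Fin (N+1)) (Fin (N+1)) ℂ))
    (hdim : Module.finrank ℂ M = 2)
    (hskew : ∀ A ∈ M, Aᵀ = -A)
    (hrank : ∀ A ∈ M, A ≠ 0 → A.rank = 2*r)
    (hker : (⨅ A ∈ M, LinearMap.ker (Matrix.mulVecLin A)) = ⊥)
    (hrange : (⨆ A ∈ M, LinearMap.range (Matrix.mulVecLin A)) = ⊤) :
    ∃ rpart : Fin (N + 1 - 2*r) → ℕ,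
      (∀ i, 1 ≤ rpart i) ∧
      (∀ i j, i ≤ j → rpart j ≤ rpart i) ∧
      (∑ i, rpart i = r) ∧
      ∃ S : Matrix (Fin (N+1)) (Fin (N+1)) ℂ, IsUnit S ∧
      ∃ A B, A ∈ M ∧ B ∈ M ∧ LinearIndependent ℂ ![A, B] ∧
        Submodule.span ℂ {A, B} = M ∧
        S * A * Sᵀ = Matrix.reindex (finCongr (by omega)) (finCongr (by omega))
          (Fpencil rpart r 1 0) ∧
        S * B * Sᵀ = Matrix.reindex (finCongr (by omega)) (finCongr (by omega))
          (Fpencil rpart r 0 1) := by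
  obtain ⟨A, B, hAB, rfl⟩ := exists_linearIndependent_pair_span_eq M hdim
  have hA : A ∈ Submodule.span ℂ {A, B} := Submodule.mem_span_of_mem (by simp)
  have hB : B ∈ Submodule.span ℂ {A, B} := Submodule.mem_span_of_mem (by simp)
  have hrankAB (a b : ℂ) (hab : a ≠ 0 ∨ b ≠ 0) : (a • A + b • B).rank = 2 * r :=
    hrank _ (Submodule.mem_span_pair.mpr ⟨a, b, rfl⟩) fun h0 =>
      hab.elim (absurd (LinearIndependent.pair_iff.mp hAB a b h0).1)
        (absurd (LinearIndependent.pair_iff.mp hAB a b h0).2)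
  obtain ⟨ρ, hρ, hpos, hcard, hS⟩ := exists_isUnit_mul_mul_transpose_eq_fromBlocks
    (d := N + 1 - 2 * r) (hskew A hA) (hskew B hB)
    (fun a b hab => by rw [hrankAB a b hab, Fintype.card_fin]; omega)
    (disjoint_iff_inf_le.mpr ((ker_mulVecLin_inf_le_iInf A B).trans hker.le))
  have hsum : ∑ i, ρ i = r := by rw [Fintype.card_fin] at hcard; omega
  obtain ⟨S, hSunit, hSA, hSB⟩ := hS ((pencilEquiv hsum).trans (finCongr (by omega)))
  refine ⟨ρ, hpos, hρ, hsum, S, hSunit, A, B, hA, hB, hAB, rfl, ?_, ?_⟩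
  · rw [hSA, Fpencil_eq_reindex hsum, submatrix_Fbar_one_zero]
    rfl
  · rw [hSB, Fpencil_eq_reindex hsum, submatrix_Fbar_zero_one]
    rfl
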